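/- Let n ≥ 1 and μ, λ > 0. On the n-qubit space (ℂ²)^{⊗n}, let H̃ = μ Σ_{j=1}^n σ_z^{(j)} − λ n · (σ_x ⊗ σ_x ⊗ ⋯ ⊗ σ_x) (n factors of σ_x). Then the smallest eigenvalue of the Hermitian operator H̃ is −n√(μ² + λ²), and the corresponding eigenspace is one-dimensional, spanned by the vector λ·|1⟩^{⊗n} + (μ + √(μ² + λ²))·|0⟩^{⊗n}. -/

import Mathlib

open Matrix

/-!
The total magnetization `∑ⱼ σ_z^{(j)}` is diagonal in the computational basis and anticommutes with
`σ_x ⊗ ⋯ ⊗ σ_x`, so the square of the Hamiltonian is diagonal, with entry `μ² m(s)² + λ² n²` at a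
configuration `s` of magnetization `m(s)`. As `|m(s)| ≤ n`, every eigenvalue lies in
`[-n √(μ² + λ²), n √(μ² + λ²)]`. Since `|m(s)| = n` only for the two constant configurations, an
eigenvector for an endpoint is supported on them, and there the Hamiltonian is `n` times
`!![μ, -λ; -λ, -μ]`, whose lower eigenspace is a line.
-/

theorem exists_eq_mul_and_eq_mul_of_mul_eq_mul {K : Type*} [Field K] {a b x y : K}
    (hab : a ≠ 0 ∨ b ≠ 0) (h : b * x = a * y) : ∃ c, x = c * a ∧ y = c * b := by
  rcases hab with ha | hb
  · exact ⟨x / a, by field_simp, by field_simp; linear_combination -h⟩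
  · exact ⟨y / b, by field_simp; linear_combination h, by field_simp⟩

theorem sq_mul_sqrt_sq_add_sq (a b t : ℝ) :
    (t * √(a ^ 2 + b ^ 2)) ^ 2 = a ^ 2 * t ^ 2 + b ^ 2 * t ^ 2 := by
  rw [mul_pow, Real.sq_sqrt (by positivity)]
  ring

theorem funext_of_top_of_bot {α β : Type*} [Top α] [Bot α] {f g : α → β} (htop : f ⊤ = g ⊤)
    (hbot : f ⊥ = g ⊥) (h : ∀ a, a ≠ ⊤ → a ≠ ⊥ → f a = g a) : f = g := by
  funext a
  by_cases ha_top : a = ⊤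
  · exact ha_top ▸ htop
  by_cases ha_bot : a = ⊥
  · exact ha_bot ▸ hbot
  · exact h a ha_top ha_bot

theorem sq_eq_of_mulVec_eq_smul_of_mul_self_eq_diagonal {m R : Type*} [Fintype m] [DecidableEq m]
    [CommSemiring R] [IsCancelMulZero R] {A : Matrix m m R} {d x : m → R} {c : R}
    (hA : A * A = diagonal d) (hx : A *ᵥ x = c • x) {i : m} (hi : x i ≠ 0) : c ^ 2 = d i := by
  have hAAx : diagonal d *ᵥ x = c ^ 2 • x := by
    rw [← hA, ← mulVec_mulVec, hx, mulVec_smul, hx, smul_smul, sq]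
  have hcoord : d i * x i = c ^ 2 * x i := by
    simpa only [mulVec_diagonal, Pi.smul_apply, smul_eq_mul] using congrFun hAAx i
  exact (mul_right_cancel₀ hi hcoord).symm

section Magnetization

variable {ι : Type*} [Fintype ι]

/-- The total magnetization of a spin configuration, i.e. the eigenvalue of `∑ⱼ σ_z^{(j)}` at the
corresponding basis vector. Configurations form the Boolean algebra `ι → Bool`, in which `⊤` is
`|1…1⟩`, `⊥` is `|0…0⟩` and the complement `sᶜ` flips every bit. -/
def magnetization (s : ι → Bool) : ℤ := ∑ j, if s j then 1 else -1

theorem magnetization_compl (s : ι → Bool) : magnetization sᶜ = -magnetization s := by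
  simp only [magnetization, ← Finset.sum_neg_distrib]
  exact Finset.sum_congr rfl fun j _ => by cases hj : s j <;> simp [hj]

theorem magnetization_top : magnetization (⊤ : ι → Bool) = Fintype.card ι := by
  simp [magnetization]

theorem magnetization_bot : magnetization (⊥ : ι → Bool) = -Fintype.card ι := by
  rw [← compl_top, magnetization_compl, magnetization_top]

theorem magnetization_le_card (s : ι → Bool) : magnetization s ≤ Fintype.card ι := by
  rw [← magnetization_top]
  exact Finset.sum_le_sum fun j _ => by cases s j <;> simp

theorem magnetization_eq_card_iff {s : ι → Bool} : magnetization s = Fintype.card ι ↔ s = ⊤ := by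
  refine ⟨fun h => funext fun j => ?_, fun h => h ▸ magnetization_top⟩
  rw [← magnetization_top] at h
  have hsite := (Finset.sum_eq_sum_iff_of_le fun j _ => by cases s j <;> simp).mp h j
    (Finset.mem_univ j)
  cases hj : s j <;> simp [hj] at hsite ⊢

theorem sq_magnetization_le_sq_card (s : ι → Bool) :
    magnetization s ^ 2 ≤ (Fintype.card ι : ℤ) ^ 2 := by
  have hcompl := magnetization_le_card sᶜ
  rw [magnetization_compl] at hcompl
  exact sq_le_sq' (by linarith) (magnetization_le_card s)

theorem sq_magnetization_eq_sq_card_iff {s : ι → Bool} :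
    magnetization s ^ 2 = (Fintype.card ι : ℤ) ^ 2 ↔ s = ⊤ ∨ s = ⊥ := by
  rw [sq_eq_sq_iff_eq_or_eq_neg, ← compl_eq_top (x := s), ← magnetization_eq_card_iff,
    ← magnetization_eq_card_iff, magnetization_compl, neg_eq_iff_eq_neg]

end Magnetization

section Operators

variable {ι : Type*} [Fintype ι]

/-- The Pauli operator `σ_z` acting on the qubit at site `j`, in the computational basis. -/
def pauliZ (j : ι) : Matrix (ι → Bool) (ι → Bool) ℂ := diagonal fun s => if s j then 1 else -1

theorem sum_pauliZ : ∑ j : ι, pauliZ j = diagonal fun s => (magnetization s : ℂ) := by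
  ext s t
  by_cases h : s = t <;> simp [pauliZ, magnetization, Matrix.sum_apply, h]

variable (ι)

/-- The tensor product `σ_x ⊗ ⋯ ⊗ σ_x` over all sites, which flips every bit. -/
def pauliXTensor : Matrix (ι → Bool) (ι → Bool) ℂ := of fun s t => if s = tᶜ then 1 else 0

/-- The Hamiltonian `μ ∑ⱼ σ_z^{(j)} - λ n σ_x ⊗ ⋯ ⊗ σ_x` on qubits indexed by `ι`, where `n` is the
number of sites. -/
def ghzHamiltonian (μ lam : ℝ) : Matrix (ι → Bool) (ι → Bool) ℂ :=
  (μ : ℂ) • ∑ j, pauliZ j - ((lam * Fintype.card ι : ℝ) : ℂ) • pauliXTensor ι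

/-- The unnormalized GHZ-type vector `λ |1…1⟩ + (μ + √(μ² + λ²)) |0…0⟩`. If `ι` is empty then
`⊤ = ⊥` and the value is `λ`. -/
noncomputable def ghzVector (μ lam : ℝ) : (ι → Bool) → ℂ := fun s =>
  if s = ⊤ then (lam : ℂ) else if s = ⊥ then ((μ + √(μ ^ 2 + lam ^ 2) : ℝ) : ℂ) else 0

variable {ι} {μ lam : ℝ}

theorem ghzVector_top : ghzVector ι μ lam ⊤ = lam := if_pos rfl

theorem ghzVector_bot [Nonempty ι] :
    ghzVector ι μ lam ⊥ = ((μ + √(μ ^ 2 + lam ^ 2) : ℝ) : ℂ) := by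
  rw [ghzVector, if_neg bot_ne_top, if_pos rfl]

theorem ghzVector_of_ne {s : ι → Bool} (hs_top : s ≠ ⊤) (hs_bot : s ≠ ⊥) :
    ghzVector ι μ lam s = 0 := by
  rw [ghzVector, if_neg hs_top, if_neg hs_bot]

theorem ghzVector_ne_zero (hlam : lam ≠ 0) : ghzVector ι μ lam ≠ 0 :=
  Function.ne_iff.mpr ⟨⊤, by simpa [ghzVector_top] using hlam⟩

variable [DecidableEq ι]

theorem pauliXTensor_mulVec_apply (x : (ι → Bool) → ℂ) (s : ι → Bool) :
    (pauliXTensor ι *ᵥ x) s = x sᶜ := by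
  simp [pauliXTensor, mulVec, dotProduct, eq_compl_comm (x := s)]

theorem ghzHamiltonian_mulVec_apply (μ lam : ℝ) (x : (ι → Bool) → ℂ) (s : ι → Bool) :
    (ghzHamiltonian ι μ lam *ᵥ x) s =
      μ * magnetization s * x s - lam * Fintype.card ι * x sᶜ := by
  simp [ghzHamiltonian, sum_pauliZ, sub_mulVec, smul_mulVec, mulVec_diagonal,
    pauliXTensor_mulVec_apply, mul_assoc]

theorem ghzHamiltonian_mul_self (μ lam : ℝ) :
    ghzHamiltonian ι μ lam * ghzHamiltonian ι μ lam = diagonal fun s =>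
      ((μ ^ 2 * magnetization s ^ 2 + lam ^ 2 * Fintype.card ι ^ 2 : ℝ) : ℂ) := by
  refine mulVec_injective (funext fun x => funext fun s => ?_)
  simp only [← mulVec_mulVec, ghzHamiltonian_mulVec_apply, mulVec_diagonal, magnetization_compl,
    compl_compl]
  push_cast
  ring

theorem sq_eigenvalue_ghzHamiltonian {c : ℝ} {x : (ι → Bool) → ℂ} {s : ι → Bool}
    (hx : ghzHamiltonian ι μ lam *ᵥ x = (c : ℂ) • x) (hs : x s ≠ 0) :
    c ^ 2 = μ ^ 2 * magnetization s ^ 2 + lam ^ 2 * Fintype.card ι ^ 2 := by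
  exact_mod_cast sq_eq_of_mulVec_eq_smul_of_mul_self_eq_diagonal (ghzHamiltonian_mul_self μ lam)
    hx hs

theorem abs_eigenvalue_ghzHamiltonian_le {c : ℝ} {x : (ι → Bool) → ℂ} (hx0 : x ≠ 0)
    (hx : ghzHamiltonian ι μ lam *ᵥ x = (c : ℂ) • x) :
    |c| ≤ Fintype.card ι * √(μ ^ 2 + lam ^ 2) := by
  obtain ⟨s, hs⟩ := Function.ne_iff.mp hx0
  have hmag : (magnetization s : ℝ) ^ 2 ≤ (Fintype.card ι : ℝ) ^ 2 :=
    mod_cast sq_magnetization_le_sq_card s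
  refine abs_le_of_sq_le_sq ?_ (by positivity)
  rw [sq_eigenvalue_ghzHamiltonian hx hs, sq_mul_sqrt_sq_add_sq]
  gcongr

theorem apply_eq_zero_of_extremal_eigenvector (hμ : μ ≠ 0) {c : ℝ} {x : (ι → Bool) → ℂ}
    (hc : |c| = Fintype.card ι * √(μ ^ 2 + lam ^ 2))
    (hx : ghzHamiltonian ι μ lam *ᵥ x = (c : ℂ) • x)
    {s : ι → Bool} (hs_top : s ≠ ⊤) (hs_bot : s ≠ ⊥) : x s = 0 := by
  by_contra hs
  have hsq := sq_eigenvalue_ghzHamiltonian hx hs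
  rw [← sq_abs, hc, sq_mul_sqrt_sq_add_sq, add_left_inj] at hsq
  have hmag : magnetization s ^ 2 = (Fintype.card ι : ℤ) ^ 2 :=
    mod_cast (mul_left_cancel₀ (pow_ne_zero 2 hμ) hsq).symm
  exact (sq_magnetization_eq_sq_card_iff.mp hmag).elim hs_top hs_bot

theorem ghzHamiltonian_mulVec_ghzVector [Nonempty ι] :
    ghzHamiltonian ι μ lam *ᵥ ghzVector ι μ lam =
      ((-(Fintype.card ι * √(μ ^ 2 + lam ^ 2)) : ℝ) : ℂ) • ghzVector ι μ lam := by
  have hsqrt : ((√(μ ^ 2 + lam ^ 2) : ℝ) : ℂ) ^ 2 = μ ^ 2 + lam ^ 2 := by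
    exact_mod_cast Real.sq_sqrt (by positivity : 0 ≤ μ ^ 2 + lam ^ 2)
  refine funext_of_top_of_bot ?_ ?_ fun s hs_top hs_bot => ?_ <;>
    rw [ghzHamiltonian_mulVec_apply, Pi.smul_apply, smul_eq_mul]
  · rw [compl_top, magnetization_top, ghzVector_top, ghzVector_bot]
    push_cast
    ring
  · rw [compl_bot, magnetization_bot, ghzVector_top, ghzVector_bot]
    push_cast
    linear_combination (Fintype.card ι : ℂ) * hsqrt
  · rw [ghzVector_of_ne hs_top hs_bot,
      ghzVector_of_ne (mt compl_eq_top.mp hs_bot) (mt compl_eq_bot.mp hs_top)]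
    ring

theorem exists_eq_smul_ghzVector [Nonempty ι] (hμ : μ ≠ 0) (hg : ghzVector ι μ lam ≠ 0)
    {x : (ι → Bool) → ℂ} (hx : ghzHamiltonian ι μ lam *ᵥ x =
      ((-(Fintype.card ι * √(μ ^ 2 + lam ^ 2)) : ℝ) : ℂ) • x) :
    ∃ c : ℂ, x = c • ghzVector ι μ lam := by
  have hcoeff : ghzVector ι μ lam ⊤ ≠ 0 ∨ ghzVector ι μ lam ⊥ ≠ 0 := by
    contrapose! hg
    exact funext_of_top_of_bot hg.1 hg.2 fun s => ghzVector_of_ne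
  have hratio : ghzVector ι μ lam ⊥ * x ⊤ = ghzVector ι μ lam ⊤ * x ⊥ := by
    have htop := congrFun hx ⊤
    rw [ghzHamiltonian_mulVec_apply, magnetization_top, compl_top, Pi.smul_apply, smul_eq_mul]
      at htop
    rw [ghzVector_bot, ghzVector_top]
    apply mul_left_cancel₀ (Nat.cast_ne_zero.mpr Fintype.card_ne_zero : (Fintype.card ι : ℂ) ≠ 0)
    push_cast at htop ⊢
    linear_combination htop
  obtain ⟨c, hc_top, hc_bot⟩ := exists_eq_mul_and_eq_mul_of_mul_eq_mul hcoeff hratio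
  refine ⟨c, funext_of_top_of_bot hc_top hc_bot fun s hs_top hs_bot => ?_⟩
  have habs : |-(Fintype.card ι * √(μ ^ 2 + lam ^ 2))| = Fintype.card ι * √(μ ^ 2 + lam ^ 2) := by
    rw [abs_neg, abs_of_nonneg (by positivity)]
  rw [apply_eq_zero_of_extremal_eigenvector hμ habs hx hs_top hs_bot, Pi.smul_apply,
    ghzVector_of_ne hs_top hs_bot, smul_zero]

theorem ground_state_of_ghz_hamiltonian_general [Nonempty ι] (hμ : μ ≠ 0)
    (hg : ghzVector ι μ lam ≠ 0) :
    ghzHamiltonian ι μ lam *ᵥ ghzVector ι μ lam =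
      ((-(Fintype.card ι * √(μ ^ 2 + lam ^ 2)) : ℝ) : ℂ) • ghzVector ι μ lam ∧
    (∀ (c : ℝ) (x : (ι → Bool) → ℂ), x ≠ 0 → ghzHamiltonian ι μ lam *ᵥ x = (c : ℂ) • x →
      -(Fintype.card ι * √(μ ^ 2 + lam ^ 2)) ≤ c) ∧
    (∀ x : (ι → Bool) → ℂ, ghzHamiltonian ι μ lam *ᵥ x =
        ((-(Fintype.card ι * √(μ ^ 2 + lam ^ 2)) : ℝ) : ℂ) • x →
      ∃ c : ℂ, x = c • ghzVector ι μ lam) :=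
  ⟨ghzHamiltonian_mulVec_ghzVector,
    fun _ _ hx0 hx => neg_le_of_abs_le (abs_eigenvalue_ghzHamiltonian_le hx0 hx),
    fun _ hx => exists_eq_smul_ghzVector hμ hg hx⟩

end Operators

/-- For `H̃ = μ Σ_j σ_z^{(j)} - λ n · σ_x⊗⋯⊗σ_x` on `n` qubits with
`μ, λ > 0`, the smallest eigenvalue is `-n √(μ² + λ²)`, with one-dimensional eigenspace
spanned by `λ |1…1⟩ + (μ + √(μ² + λ²)) |0…0⟩`.
The `n`-qubit space is modeled as functions on the computational-basis configurations
`Fin n → Bool`, where `true` at site `j` denotes `|1⟩` (`σ_z |1⟩ = |1⟩`, `σ_x |1⟩ = |0⟩`)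
and `false` denotes `|0⟩`; the all-`σ_x` tensor product flips every bit. -/
theorem ground_state_of_ghz_hamiltonian
    (n : ℕ) (hn : 1 ≤ n) (μ lam : ℝ) (hμ : 0 < μ) (hlam : 0 < lam)
    (σzLoc : Fin n → Matrix (Fin n → Bool) (Fin n → Bool) ℂ)
    (hσz : ∀ j, σzLoc j = Matrix.diagonal (fun s => if s j then (1 : ℂ) else -1))
    (X : Matrix (Fin n → Bool) (Fin n → Bool) ℂ)
    (hX : X = Matrix.of fun s t => if s = (fun j => !(t j)) then (1 : ℂ) else 0)
    (Ht : Matrix (Fin n → Bool) (Fin n → Bool) ℂ)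
    (hHt : Ht = (μ : ℂ) • ∑ j, σzLoc j - ((lam * n : ℝ) : ℂ) • X)
    (g : (Fin n → Bool) → ℂ)
    (hg : g = fun s => if s = (fun _ => true) then ((lam : ℝ) : ℂ)
      else if s = (fun _ => false) then ((μ + Real.sqrt (μ ^ 2 + lam ^ 2) : ℝ) : ℂ) else 0) :
    Ht.mulVec g = ((-(n * Real.sqrt (μ ^ 2 + lam ^ 2)) : ℝ) : ℂ) • g ∧
    (∀ (c : ℝ) (x : (Fin n → Bool) → ℂ), x ≠ 0 → Ht.mulVec x = (c : ℂ) • x →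
      -(n * Real.sqrt (μ ^ 2 + lam ^ 2)) ≤ c) ∧
    (∀ x : (Fin n → Bool) → ℂ,
      Ht.mulVec x = ((-(n * Real.sqrt (μ ^ 2 + lam ^ 2)) : ℝ) : ℂ) • x →
      ∃ c : ℂ, x = c • g) := by
  have : Nonempty (Fin n) := ⟨⟨0, hn⟩⟩
  obtain rfl : Ht = ghzHamiltonian (Fin n) μ lam := by
    rw [hHt, hX, funext hσz, ghzHamiltonian, Fintype.card_fin]
    rfl
  obtain rfl : g = ghzVector (Fin n) μ lam := hg
  simpa only [Fintype.card_fin] using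
    ground_state_of_ghz_hamiltonian_general (ι := Fin n) hμ.ne' (ghzVector_ne_zero hlam.ne')
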